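/- arXiv:1709.05890 — 3 statements merged into one kernel-verified Lean document; each statement's English description precedes it below -/
import Mathlib

section
/- Let x : ℝ → ℝ be continuously differentiable and u : ℝ → ℝ be continuous. Define X(t) = ∫_0^t cos(x(t) − x(s)) u(s) ds and Y(t) = ∫_0^t sin(x(t) − x(s)) u(s) ds. Then for every t, X is differentiable at t with X′(t) = −x′(t) · Y(t) + u(t), and Y is differentiable at t with Y′(t) = x′(t) · X(t). -/
open MeasureTheory

/-!
The function `Z = X + i Y` is `Z t = ∫ s in 0..t, exp (i (x t - x s)) u s`. The outer variable can
be pulled out, `Z t = exp (i x t) ∫ s in 0..t, exp (-i x s) u s`, so the product rule and the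
fundamental theorem of calculus give `Z' = i x' Z + u`. The real and imaginary parts of this linear
equation are the two equations for `X` and `Y`.
-/

open Complex Topology

theorem hasDerivAt_integral_exp_sub_smul {E : Type*} [NormedAddCommGroup E] [NormedSpace ℂ E]
    [CompleteSpace E] {φ : ℝ → ℂ} {φ' : ℂ} {u : ℝ → E} {a t : ℝ} (hφ : Continuous φ)
    (hφ' : HasDerivAt φ φ' t) (hu : IntervalIntegrable u volume a t)
    (hmeas : StronglyMeasurableAtFilter u (𝓝 t)) (hut : ContinuousAt u t) :
    HasDerivAt (fun r ↦ ∫ s in a..r, exp (φ r - φ s) • u s)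
      (φ' • (∫ s in a..t, exp (φ t - φ s) • u s) + u t) t := by
  have factor (r : ℝ) : ∫ s in a..r, exp (φ r - φ s) • u s =
      exp (φ r) • ∫ s in a..r, exp (-φ s) • u s := by
    simp only [sub_eq_add_neg, exp_add, mul_smul, intervalIntegral.integral_smul]
  have hexp : Continuous fun s ↦ exp (-φ s) := by fun_prop
  have hexp_meas : StronglyMeasurableAtFilter (fun s ↦ exp (-φ s) • u s) (𝓝 t) :=
    let ⟨v, hv, huv⟩ := hmeas
    ⟨v, hv, hexp.aestronglyMeasurable.smul huv⟩
  have hprim : HasDerivAt (fun r ↦ ∫ s in a..r, exp (-φ s) • u s) (exp (-φ t) • u t) t :=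
    intervalIntegral.integral_hasDerivAt_right (hu.continuousOn_smul hexp.continuousOn) hexp_meas
      (hexp.continuousAt.smul hut)
  simp only [factor]
  refine (hφ'.cexp.smul hprim).congr_deriv ?_
  rw [smul_smul, ← exp_add, add_neg_cancel, exp_zero, one_smul, mul_comm, mul_smul, add_comm]

section RealAndImaginaryParts

variable {μ : Measure ℝ} {θ u : ℝ → ℝ} {a b : ℝ}

theorem intervalIntegrable_exp_mul_I_smul (hθ : Continuous θ) (hu : IntervalIntegrable u μ a b) :
    IntervalIntegrable (fun s ↦ exp (θ s * I) • (u s : ℂ)) μ a b :=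
  IntervalIntegrable.continuousOn_smul ⟨hu.1.ofReal, hu.2.ofReal⟩ (by fun_prop)

theorem re_integral_exp_mul_I_smul (hθ : Continuous θ) (hu : IntervalIntegrable u μ a b) :
    (∫ s in a..b, exp (θ s * I) • (u s : ℂ) ∂μ).re = ∫ s in a..b, Real.cos (θ s) * u s ∂μ := by
  simpa [exp_ofReal_mul_I_re] using
    (intervalIntegral.intervalIntegral_re (intervalIntegrable_exp_mul_I_smul hθ hu)).symm

theorem im_integral_exp_mul_I_smul (hθ : Continuous θ) (hu : IntervalIntegrable u μ a b) :
    (∫ s in a..b, exp (θ s * I) • (u s : ℂ) ∂μ).im = ∫ s in a..b, Real.sin (θ s) * u s ∂μ := by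
  simpa [exp_ofReal_mul_I_im] using
    (intervalIntegral.intervalIntegral_im (intervalIntegrable_exp_mul_I_smul hθ hu)).symm

end RealAndImaginaryParts

theorem stmt_4_general {x u X Y : ℝ → ℝ} {a t : ℝ} (hx : Continuous x)
    (hxt : DifferentiableAt ℝ x t) (hu : LocallyIntegrable u) (hut : ContinuousAt u t)
    (hX : ∀ r, X r = ∫ s in a..r, Real.cos (x r - x s) * u s)
    (hY : ∀ r, Y r = ∫ s in a..r, Real.sin (x r - x s) * u s) :
    HasDerivAt X (-(deriv x t) * Y t + u t) t ∧ HasDerivAt Y (deriv x t * X t) t := by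
  have hu_int (r : ℝ) : IntervalIntegrable u volume a r :=
    (hu.integrableOn_isCompact isCompact_uIcc).intervalIntegrable
  have hu_meas : AEStronglyMeasurable (fun s ↦ (u s : ℂ)) :=
    continuous_ofReal.comp_aestronglyMeasurable hu.aestronglyMeasurable
  let Z : ℝ → ℂ := fun r ↦ ∫ s in a..r, exp (x r * I - x s * I) • (u s : ℂ)
  have hX_re (r : ℝ) : X r = (Z r).re := by
    simp only [hX, Z, ← sub_mul, ← ofReal_sub]
    rw [re_integral_exp_mul_I_smul (by fun_prop) (hu_int r)]
  have hY_im (r : ℝ) : Y r = (Z r).im := by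
    simp only [hY, Z, ← sub_mul, ← ofReal_sub]
    rw [im_integral_exp_mul_I_smul (by fun_prop) (hu_int r)]
  have hZ' : HasDerivAt Z ((deriv x t * I) • Z t + u t) t :=
    hasDerivAt_integral_exp_sub_smul (by fun_prop) (hxt.hasDerivAt.ofReal_comp.mul_const I)
      ⟨(hu_int t).1.ofReal, (hu_int t).2.ofReal⟩ hu_meas.stronglyMeasurableAtFilter (by fun_prop)
  rw [funext hX_re, funext hY_im]
  constructor
  · exact (reCLM.hasFDerivAt.comp_hasDerivAt t hZ').congr_deriv (by simp)
  · exact (imCLM.hasFDerivAt.comp_hasDerivAt t hZ').congr_deriv (by simp)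

theorem stmt_4 (x : ℝ → ℝ) (hx : ContDiff ℝ 1 x) (u : ℝ → ℝ) (hu : Continuous u)
    (X Y : ℝ → ℝ)
    (hX : ∀ t : ℝ, X t = ∫ s in (0:ℝ)..t, Real.cos (x t - x s) * u s)
    (hY : ∀ t : ℝ, Y t = ∫ s in (0:ℝ)..t, Real.sin (x t - x s) * u s) :
    ∀ t : ℝ, HasDerivAt X (-(deriv x t) * Y t + u t) t ∧
      HasDerivAt Y (deriv x t * X t) t :=
  fun t ↦ stmt_4_general hx.continuous (hx.differentiable one_ne_zero t) hu.locallyIntegrable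
    hu.continuousAt hX hY
end

section
/- Let x : ℝ → ℝ be continuously differentiable and u : ℝ → ℝ be continuous. Define X(t) = ∫_0^t cos(x(t) − x(s)) u(s) ds and Y(t) = ∫_0^t sin(x(t) − x(s)) u(s) ds. Then for every t ≥ 0, Y(t) = ∫_0^t X(s) · x′(s) ds. -/
open MeasureTheory

/-!
The addition formulas separate the variables: with `C t = ∫ s in a..t, cos (x s) * u s` and
`S t = ∫ s in a..t, sin (x s) * u s`,
`∫ s in a..t, sin (x t - x s) * u s = sin (x t) * C t - cos (x t) * S t`.
In the derivative of the right-hand side the terms `sin (x t) * C' t` and `cos (x t) * S' t`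
cancel, which leaves `(cos (x t) * C t + sin (x t) * S t) * x' t`, and the factor in parentheses
is `∫ s in a..t, cos (x t - x s) * u s`. For `x` absolutely continuous and `u` integrable this
holds almost everywhere, and the fundamental theorem of calculus for absolutely continuous
functions concludes.
-/

theorem absolutelyContinuousOnInterval_comp_of_lipschitzWith {E F : Type*} [PseudoMetricSpace E]
    [PseudoMetricSpace F] {K : NNReal} {g : E → F} {f : ℝ → E} {a b : ℝ} (hg : LipschitzWith K g)
    (hf : AbsolutelyContinuousOnInterval f a b) :
    AbsolutelyContinuousOnInterval (fun r => g (f r)) a b := by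
  refine squeeze_zero (fun _ => Finset.sum_nonneg fun _ _ => dist_nonneg) (fun I => ?_)
    (by simpa only [mul_zero] using Filter.Tendsto.const_mul (K : ℝ) hf)
  rw [Finset.mul_sum]
  exact Finset.sum_le_sum fun _ _ => hg.dist_le_mul _ _

theorem integral_eq_sub_of_ae_hasDerivAt {f f' : ℝ → ℝ} {a b : ℝ}
    (hf : AbsolutelyContinuousOnInterval f a b)
    (hf' : ∀ᵐ r, r ∈ Set.uIcc a b → HasDerivAt f (f' r) r) :
    ∫ r in a..b, f' r = f b - f a := by
  rw [← hf.integral_deriv_eq_sub]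
  refine intervalIntegral.integral_congr_ae ?_
  filter_upwards [hf'] with r hr hmem
  exact (hr (Set.uIoc_subset_uIcc hmem)).deriv.symm

section AdditionFormulas

variable {x u : ℝ → ℝ} {a b : ℝ} {μ : Measure ℝ}

theorem integral_cos_sub_mul
    (hcos : IntervalIntegrable (fun s => Real.cos (x s) * u s) μ a b)
    (hsin : IntervalIntegrable (fun s => Real.sin (x s) * u s) μ a b) (θ : ℝ) :
    ∫ s in a..b, Real.cos (θ - x s) * u s ∂μ =
      Real.cos θ * ∫ s in a..b, Real.cos (x s) * u s ∂μ +
        Real.sin θ * ∫ s in a..b, Real.sin (x s) * u s ∂μ := by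
  simp only [← intervalIntegral.integral_const_mul,
    ← intervalIntegral.integral_add (hcos.const_mul _) (hsin.const_mul _), Real.cos_sub, add_mul,
    mul_assoc]

theorem integral_sin_sub_mul
    (hcos : IntervalIntegrable (fun s => Real.cos (x s) * u s) μ a b)
    (hsin : IntervalIntegrable (fun s => Real.sin (x s) * u s) μ a b) (θ : ℝ) :
    ∫ s in a..b, Real.sin (θ - x s) * u s ∂μ =
      Real.sin θ * ∫ s in a..b, Real.cos (x s) * u s ∂μ -
        Real.cos θ * ∫ s in a..b, Real.sin (x s) * u s ∂μ := by
  simp only [← intervalIntegral.integral_const_mul,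
    ← intervalIntegral.integral_sub (hcos.const_mul _) (hsin.const_mul _), Real.sin_sub, sub_mul,
    mul_assoc]

end AdditionFormulas

theorem hasDerivAt_sin_mul_sub_cos_mul {x C S : ℝ → ℝ} {x' v r : ℝ} (hx : HasDerivAt x x' r)
    (hC : HasDerivAt C (Real.cos (x r) * v) r) (hS : HasDerivAt S (Real.sin (x r) * v) r) :
    HasDerivAt (fun t => Real.sin (x t) * C t - Real.cos (x t) * S t)
      ((Real.cos (x r) * C r + Real.sin (x r) * S r) * x') r :=
  ((hx.sin.mul hC).sub (hx.cos.mul hS)).congr_deriv (by ring)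

theorem stmt_5_general {x u : ℝ → ℝ} {a t : ℝ} (hx : AbsolutelyContinuousOnInterval x a t)
    (hu : IntervalIntegrable u volume a t) :
    ∫ s in a..t, Real.sin (x t - x s) * u s =
      ∫ s in a..t, (∫ r in a..s, Real.cos (x s - x r) * u r) * deriv x s := by
  have hcos_ac : AbsolutelyContinuousOnInterval (fun r => Real.cos (x r)) a t :=
    absolutelyContinuousOnInterval_comp_of_lipschitzWith Real.lipschitzWith_cos hx
  have hsin_ac : AbsolutelyContinuousOnInterval (fun r => Real.sin (x r)) a t :=
    absolutelyContinuousOnInterval_comp_of_lipschitzWith Real.lipschitzWith_sin hx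
  have hcos : IntervalIntegrable (fun s => Real.cos (x s) * u s) volume a t :=
    hu.continuousOn_mul hcos_ac.continuousOn
  have hsin : IntervalIntegrable (fun s => Real.sin (x s) * u s) volume a t :=
    hu.continuousOn_mul hsin_ac.continuousOn
  let C : ℝ → ℝ := fun r => ∫ s in a..r, Real.cos (x s) * u s
  let S : ℝ → ℝ := fun r => ∫ s in a..r, Real.sin (x s) * u s
  let F : ℝ → ℝ := fun r => Real.sin (x r) * C r - Real.cos (x r) * S r
  have ha : a ∈ Set.uIcc a t := Set.left_mem_uIcc
  have hF : AbsolutelyContinuousOnInterval F a t :=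
    (hsin_ac.fun_mul (hcos.absolutelyContinuousOnInterval_intervalIntegral ha)).fun_sub
      (hcos_ac.fun_mul (hsin.absolutelyContinuousOnInterval_intervalIntegral ha))
  have hF_deriv : ∀ᵐ r, r ∈ Set.uIcc a t →
      HasDerivAt F ((∫ s in a..r, Real.cos (x r - x s) * u s) * deriv x r) r := by
    filter_upwards [hx.ae_differentiableAt, hcos.ae_hasDerivAt_integral,
      hsin.ae_hasDerivAt_integral] with r hxr hCr hSr hr
    have hsub : Set.uIcc a r ⊆ Set.uIcc a t := Set.uIcc_subset_uIcc_left hr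
    rw [integral_cos_sub_mul (hcos.mono_set hsub) (hsin.mono_set hsub)]
    exact hasDerivAt_sin_mul_sub_cos_mul (hxr hr).hasDerivAt (hCr hr a ha) (hSr hr a ha)
  have hF_left : F a = 0 := by simp [F, C, S]
  calc
    ∫ s in a..t, Real.sin (x t - x s) * u s = F t := integral_sin_sub_mul hcos hsin (x t)
    _ = F t - F a := by rw [hF_left, sub_zero]
    _ = ∫ s in a..t, (∫ r in a..s, Real.cos (x s - x r) * u r) * deriv x s :=
      (integral_eq_sub_of_ae_hasDerivAt hF hF_deriv).symm

theorem stmt_5 (x : ℝ → ℝ) (hx : ContDiff ℝ 1 x) (u : ℝ → ℝ) (hu : Continuous u)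
    (X Y : ℝ → ℝ)
    (hX : ∀ t : ℝ, X t = ∫ s in (0:ℝ)..t, Real.cos (x t - x s) * u s)
    (hY : ∀ t : ℝ, Y t = ∫ s in (0:ℝ)..t, Real.sin (x t - x s) * u s) :
    ∀ t : ℝ, 0 ≤ t → Y t = ∫ s in (0:ℝ)..t, X s * deriv x s := by
  intro t _
  simpa only [hX, hY] using
    stmt_5_general hx.contDiffOn.absolutelyContinuousOnInterval (hu.intervalIntegrable 0 t)
end

section
/- Let x : ℝ → ℝ be continuously differentiable and σ, u : ℝ → ℝ be continuous. Define X̃(t) = ∫_0^t cos(x(t) − x(s)) · exp((1/2) ∫_s^t σ(r)² dr) · u(s) ds and Ỹ(t) = ∫_0^t sin(x(t) − x(s)) · exp((1/2) ∫_s^t σ(r)² dr) · u(s) ds. Then for every t, X̃ is differentiable at t with X̃′(t) = −x′(t) · Ỹ(t) + (1/2) σ(t)² · X̃(t) + u(t), and Ỹ is differentiable at t with Ỹ′(t) = x′(t) · X̃(t) + (1/2) σ(t)² · Ỹ(t). -/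
open MeasureTheory

/-!
Put `G t = ∫ r in a..t, c r + i x t`, where `c` is the growth rate (`c = σ² / 2` in `stmt_10`), and
`Z t = ∫ s in a..t, exp (G t - G s) * u s`. The real and imaginary parts of `Z` are the cosine and
sine integrals. Pulling `exp (G t)` out of the integral leaves the moving endpoint as the only
dependence on `t`, so `Z' = G' Z + u`; the coupled system is the real and imaginary part of this
scalar linear equation.
-/

section LocalIntegrability

theorem locallyIntegrable_ofReal {α : Type*} [TopologicalSpace α] [MeasurableSpace α]
    {μ : Measure α} {u : α → ℝ} (hu : LocallyIntegrable u μ) :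
    LocallyIntegrable (fun s ↦ (u s : ℂ)) μ := fun s ↦
  let ⟨v, hv, huv⟩ := hu s
  ⟨v, hv, huv.ofReal⟩

variable {E : Type*} [NormedAddCommGroup E] {f : ℝ → E} {μ : Measure ℝ}

theorem locallyIntegrable_continuous_smul {𝕜 : Type*} [NormedRing 𝕜] [Module 𝕜 E]
    [IsBoundedSMul 𝕜 E] {w : ℝ → 𝕜} (hw : Continuous w) (hf : LocallyIntegrable f μ) :
    LocallyIntegrable (fun s ↦ w s • f s) μ :=
  locallyIntegrableOn_univ.1 <|
    (locallyIntegrableOn_univ.2 hf).continuousOn_smul isOpen_univ.isLocallyClosed hw.continuousOn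

theorem intervalIntegrable_of_locallyIntegrable (hf : LocallyIntegrable f μ) (a b : ℝ) :
    IntervalIntegrable f μ a b :=
  (hf.integrableOn_isCompact isCompact_uIcc).intervalIntegrable

theorem hasDerivAt_integral_of_locallyIntegrable [NormedSpace ℝ E] [CompleteSpace E]
    (hf : LocallyIntegrable f) (a : ℝ) {t : ℝ} (hft : ContinuousAt f t) :
    HasDerivAt (fun τ ↦ ∫ s in a..τ, f s) (f t) t :=
  intervalIntegral.integral_hasDerivAt_right (intervalIntegrable_of_locallyIntegrable hf a t)
    hf.aestronglyMeasurable.stronglyMeasurableAtFilter hft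

end LocalIntegrability

theorem hasDerivAt_integral_cexp_sub_smul {E : Type*} [NormedAddCommGroup E] [NormedSpace ℂ E]
    [CompleteSpace E] {G : ℝ → ℂ} {G' : ℂ} {f : ℝ → E} {t : ℝ} (a : ℝ) (hG : Continuous G)
    (hG' : HasDerivAt G G' t) (hf : LocallyIntegrable f) (hft : ContinuousAt f t) :
    HasDerivAt (fun τ ↦ ∫ s in a..τ, Complex.exp (G τ - G s) • f s)
      (G' • (∫ s in a..t, Complex.exp (G t - G s) • f s) + f t) t := by
  have factor (τ : ℝ) : ∫ s in a..τ, Complex.exp (G τ - G s) • f s =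
      Complex.exp (G τ) • ∫ s in a..τ, Complex.exp (-G s) • f s := by
    simp only [← intervalIntegral.integral_smul, smul_smul, ← Complex.exp_add, sub_eq_add_neg]
  have weight_continuous : Continuous fun s ↦ Complex.exp (-G s) := by fun_prop
  have primitive : HasDerivAt (fun τ ↦ ∫ s in a..τ, Complex.exp (-G s) • f s)
      (Complex.exp (-G t) • f t) t :=
    hasDerivAt_integral_of_locallyIntegrable
      (locallyIntegrable_continuous_smul weight_continuous hf) a
      (weight_continuous.continuousAt.smul hft)
  have weights_cancel : Complex.exp (G t) * Complex.exp (-G t) = 1 := by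
    rw [← Complex.exp_add, add_neg_cancel, Complex.exp_zero]
  simp only [factor]
  refine (hG'.cexp.smul primitive).congr_deriv ?_
  rw [smul_smul, smul_smul, weights_cancel, one_smul, add_comm, mul_comm]

section RealAndImaginaryParts

variable {f : ℝ → ℂ} {f' : ℂ} {t : ℝ}

theorem hasDerivAt_re (hf : HasDerivAt f f' t) : HasDerivAt (fun τ ↦ (f τ).re) f'.re t :=
  Complex.reCLM.hasFDerivAt.comp_hasDerivAt t hf

theorem hasDerivAt_im (hf : HasDerivAt f f' t) : HasDerivAt (fun τ ↦ (f τ).im) f'.im t :=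
  Complex.imCLM.hasFDerivAt.comp_hasDerivAt t hf

end RealAndImaginaryParts

section ExponentialTrigonometricIntegrals

variable {ρ θ u : ℝ → ℝ}

theorem integral_cexp_sub_smul_ofReal (hρ : Continuous ρ) (hθ : Continuous θ)
    (hu : LocallyIntegrable u) (a t : ℝ) :
    ∫ s in a..t, Complex.exp ((ρ t + θ t * Complex.I) - (ρ s + θ s * Complex.I)) • (u s : ℂ) =
      ⟨∫ s in a..t, Real.cos (θ t - θ s) * Real.exp (ρ t - ρ s) * u s,
        ∫ s in a..t, Real.sin (θ t - θ s) * Real.exp (ρ t - ρ s) * u s⟩ := by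
  have integrable : IntervalIntegrable (fun s ↦
      Complex.exp ((ρ t + θ t * Complex.I) - (ρ s + θ s * Complex.I)) • (u s : ℂ)) volume a t :=
    intervalIntegrable_of_locallyIntegrable
      (locallyIntegrable_continuous_smul (by fun_prop) (locallyIntegrable_ofReal hu)) a t
  apply Complex.ext
  · refine (intervalIntegral.intervalIntegral_re integrable).symm.trans ?_
    simp [Complex.exp_re, mul_comm (Real.exp _)]
  · refine (intervalIntegral.intervalIntegral_im integrable).symm.trans ?_
    simp [Complex.exp_im, mul_comm (Real.exp _)]

theorem hasDerivAt_integral_cos_and_sin_mul_exp {ρ' θ' t : ℝ} (a : ℝ) (hρ : Continuous ρ)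
    (hρ' : HasDerivAt ρ ρ' t) (hθ : Continuous θ) (hθ' : HasDerivAt θ θ' t)
    (hu : LocallyIntegrable u) (hut : ContinuousAt u t) {X Y : ℝ → ℝ}
    (hX : ∀ τ, X τ = ∫ s in a..τ, Real.cos (θ τ - θ s) * Real.exp (ρ τ - ρ s) * u s)
    (hY : ∀ τ, Y τ = ∫ s in a..τ, Real.sin (θ τ - θ s) * Real.exp (ρ τ - ρ s) * u s) :
    HasDerivAt X (-θ' * Y t + ρ' * X t + u t) t ∧ HasDerivAt Y (θ' * X t + ρ' * Y t) t := by
  have exponent_deriv : HasDerivAt (fun τ ↦ (ρ τ + θ τ * Complex.I : ℂ))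
      (ρ' + θ' * Complex.I) t :=
    hρ'.ofReal_comp.add (hθ'.ofReal_comp.mul_const Complex.I)
  have hZ : HasDerivAt (fun τ ↦ (⟨X τ, Y τ⟩ : ℂ))
      ((ρ' + θ' * Complex.I : ℂ) • (⟨X t, Y t⟩ : ℂ) + (u t : ℂ)) t := by
    simpa only [integral_cexp_sub_smul_ofReal hρ hθ hu, ← hX, ← hY] using
      hasDerivAt_integral_cexp_sub_smul a (by fun_prop) exponent_deriv
        (locallyIntegrable_ofReal hu) (Complex.continuous_ofReal.continuousAt.comp hut)
  constructor
  · refine (hasDerivAt_re hZ).congr_deriv ?_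
    simp only [smul_eq_mul, Complex.add_re, Complex.mul_re, Complex.ofReal_re, Complex.I_re,
      mul_zero, Complex.ofReal_im, Complex.I_im, mul_one, sub_self, add_zero, Complex.add_im,
      Complex.mul_im, zero_add, neg_mul, add_left_inj]
    ring
  · refine (hasDerivAt_im hZ).congr_deriv ?_
    simp only [smul_eq_mul, Complex.add_im, Complex.mul_im, Complex.add_re, Complex.ofReal_re,
      Complex.mul_re, Complex.I_re, mul_zero, Complex.ofReal_im, Complex.I_im, mul_one, sub_self,
      add_zero, zero_add]
    ring

end ExponentialTrigonometricIntegrals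

theorem stmt_10_general {x c u X Y : ℝ → ℝ} {a t x' : ℝ} (hx : Continuous x)
    (hx' : HasDerivAt x x' t) (hc : LocallyIntegrable c) (hct : ContinuousAt c t)
    (hu : LocallyIntegrable u) (hut : ContinuousAt u t)
    (hX : ∀ τ, X τ = ∫ s in a..τ, Real.cos (x τ - x s) * Real.exp (∫ r in s..τ, c r) * u s)
    (hY : ∀ τ, Y τ = ∫ s in a..τ, Real.sin (x τ - x s) * Real.exp (∫ r in s..τ, c r) * u s) :
    HasDerivAt X (-x' * Y t + c t * X t + u t) t ∧ HasDerivAt Y (x' * X t + c t * Y t) t := by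
  have c_integrable := intervalIntegrable_of_locallyIntegrable hc
  have growth_sub (s τ : ℝ) : (∫ r in a..τ, c r) - ∫ r in a..s, c r = ∫ r in s..τ, c r :=
    intervalIntegral.integral_interval_sub_left (c_integrable a τ) (c_integrable a s)
  exact hasDerivAt_integral_cos_and_sin_mul_exp (ρ := fun τ ↦ ∫ r in a..τ, c r) a
    (intervalIntegral.continuous_primitive c_integrable a)
    (hasDerivAt_integral_of_locallyIntegrable hc a hct) hx hx' hu hut
    (by simpa only [growth_sub] using hX) (by simpa only [growth_sub] using hY)

theorem stmt_10 (x : ℝ → ℝ) (hx : ContDiff ℝ 1 x) (σ u : ℝ → ℝ)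
    (hσ : Continuous σ) (hu : Continuous u)
    (X Y : ℝ → ℝ)
    (hX : ∀ t : ℝ, X t = ∫ s in (0:ℝ)..t,
      Real.cos (x t - x s) * Real.exp ((1 / 2) * ∫ r in s..t, σ r ^ 2) * u s)
    (hY : ∀ t : ℝ, Y t = ∫ s in (0:ℝ)..t,
      Real.sin (x t - x s) * Real.exp ((1 / 2) * ∫ r in s..t, σ r ^ 2) * u s) :
    ∀ t : ℝ,
      HasDerivAt X (-(deriv x t) * Y t + (1 / 2) * σ t ^ 2 * X t + u t) t ∧
      HasDerivAt Y (deriv x t * X t + (1 / 2) * σ t ^ 2 * Y t) t := by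
  simp only [← intervalIntegral.integral_const_mul] at hX hY
  have hc : Continuous fun r ↦ 1 / 2 * σ r ^ 2 := by fun_prop
  exact fun t ↦ stmt_10_general hx.continuous (hx.differentiable one_ne_zero t).hasDerivAt
    hc.locallyIntegrable hc.continuousAt hu.locallyIntegrable hu.continuousAt hX hY
end
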